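/- Fix n ≥ 1 and m ≥ 1. The map sending a subset S of the index set {1, ..., m} × {0, ..., n−1} to the closed linear span of {e_i z^{nk+j} : (i,j) ∈ S, k ∈ ℕ} is injective, and each such subspace is a reducing subspace for T_{z^n}. Consequently, T_{z^n} on H²_{ℂᵐ}(𝔻) has at least 2^{mn} distinct reducing subspaces. -/

import Mathlib

noncomputable section

/-- The vector-valued Hardy space `H²_{ℂᵐ}(𝔻)`. -/
abbrev HardyVec (m : ℕ) : Type :=
  lp (fun _ : ℕ => EuclideanSpace ℂ (Fin m)) 2

/-- The element `e_i z^p` of `H²_{ℂᵐ}(𝔻)`. -/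
def eiz (m : ℕ) (i : Fin m) (p : ℕ) : HardyVec m :=
  lp.single 2 p (EuclideanSpace.single i (1 : ℂ))

/-- The closed linear span of `{e_i z^{nk+j} : (i,j) ∈ S, k ∈ ℕ}`, for a subset `S` of the
index set `{1,…,m} × {0,…,n-1}`. -/
def spanOf (m n : ℕ) (S : Set (Fin m × Fin n)) : Submodule ℂ (HardyVec m) :=
  (Submodule.span ℂ
    {x : HardyVec m | ∃ ij ∈ S, ∃ k : ℕ, x = eiz m ij.1 (n * k + ij.2)}).topologicalClosure

lemma eiz_apply (m : ℕ) (i i' : Fin m) (p q : ℕ) :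
    (eiz m i p) q i' = if q = p ∧ i' = i then 1 else 0 := by
  unfold eiz
  rw [lp.single_apply]
  by_cases h : q = p
  · subst h
    simp
  · simp [h]

lemma inner_eiz (m : ℕ) (i : Fin m) (p : ℕ) (x : HardyVec m) :
    inner ℂ (eiz m i p) x = x p i := by
  unfold eiz
  rw [lp.inner_single_left, EuclideanSpace.inner_single_left]
  simp

lemma mem_orth (m n : ℕ) (S : Set (Fin m × Fin n)) (x : HardyVec m) :
    x ∈ (spanOf m n S)ᗮ ↔ ∀ ij ∈ S, ∀ k : ℕ, x (n * k + ij.2) ij.1 = 0 := by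
  unfold spanOf
  rw [Submodule.orthogonal_closure, Submodule.mem_orthogonal]
  constructor
  · intro h ij hij k
    rw [← inner_eiz]
    exact h _ (Submodule.subset_span ⟨ij, hij, k, rfl⟩)
  · intro h u hu
    induction hu using Submodule.span_induction with
    | mem u hu =>
      obtain ⟨ij, hij, k, rfl⟩ := hu
      rw [inner_eiz]
      exact h ij hij k
    | zero => simp
    | add a b _ _ ha hb => rw [inner_add_left, ha, hb, add_zero]
    | smul c a _ ha => rw [inner_smul_left, ha, mul_zero]

lemma eiz_mem (m n : ℕ) (S : Set (Fin m × Fin n)) (ij : Fin m × Fin n) (hij : ij ∈ S) (k : ℕ) :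
    eiz m ij.1 (n * k + ij.2) ∈ spanOf m n S :=
  Submodule.le_topologicalClosure _ (Submodule.subset_span ⟨ij, hij, k, rfl⟩)

lemma mem_iff (m n : ℕ) (S : Set (Fin m × Fin n)) (ij : Fin m × Fin n) :
    ij ∈ S ↔ eiz m ij.1 ij.2 ∈ spanOf m n S := by
  constructor
  · intro h
    simpa using eiz_mem m n S ij h 0
  · intro h
    by_contra hc
    have h2 : eiz m ij.1 ij.2 ∈ (spanOf m n S)ᗮ := by
      rw [mem_orth]
      intro ab hab k
      rw [eiz_apply, if_neg]
      rintro ⟨h3, h4⟩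
      apply hc
      have hk : k = 0 := by
        rcases Nat.eq_zero_or_pos k with hk | hk
        · exact hk
        · have := ij.2.isLt
          have := Nat.le_mul_of_pos_right n hk
          omega
      subst hk
      have : ab = ij := Prod.ext h4 (Fin.ext (by simpa using h3))
      exact this ▸ hab
    have h5 := Submodule.inner_right_of_mem_orthogonal h h2
    rw [inner_eiz, eiz_apply] at h5
    simp at h5

lemma spanOf_inj (m n : ℕ) : Function.Injective (spanOf m n) := by
  intro S S' h
  ext ij
  rw [mem_iff, mem_iff m n S', h]

lemma spanOf_red (m n : ℕ) (T : HardyVec m →L[ℂ] HardyVec m)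
    (hT : ∀ (F : HardyVec m) (k : ℕ), T F k = if k < n then 0 else F (k - n))
    (S : Set (Fin m × Fin n)) :
      (∀ x ∈ spanOf m n S, T x ∈ spanOf m n S) ∧
      (∀ x ∈ (spanOf m n S)ᗮ, T x ∈ (spanOf m n S)ᗮ) := by
  constructor
  · have hcl : IsClosed ((spanOf m n S).comap (T : HardyVec m →ₗ[ℂ] HardyVec m) :
        Set (HardyVec m)) :=
      (Submodule.isClosed_topologicalClosure _).preimage T.continuous
    have : spanOf m n S ≤ (spanOf m n S).comap (T : HardyVec m →ₗ[ℂ] HardyVec m) := by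
      refine Submodule.topologicalClosure_minimal _ (Submodule.span_le.2 ?_) hcl
      rintro _ ⟨ij, hij, k, rfl⟩
      have e : T (eiz m ij.1 (n * k + ij.2)) = eiz m ij.1 (n * (k + 1) + ij.2) := by
        ext q i
        rw [hT, eiz_apply]
        split_ifs with h1 h2 h2
        · have := h2.1
          rw [Nat.mul_succ] at this
          omega
        · rfl
        · rw [eiz_apply, if_pos]
          refine ⟨?_, h2.2⟩
          have := h2.1
          rw [Nat.mul_succ] at this
          omega
        · rw [eiz_apply, if_neg]
          rintro ⟨h3, h4⟩
          refine h2 ⟨?_, h4⟩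
          rw [Nat.mul_succ]
          omega
      change T (eiz m ij.1 (n * k + ij.2)) ∈ spanOf m n S
      rw [e]
      exact eiz_mem m n S ij hij _
    exact this
  · intro x hx
    rw [mem_orth] at hx ⊢
    intro ij hij k
    rw [hT]
    split_ifs with h
    · rfl
    · cases k with
      | zero => exact absurd (by simp) h
      | succ k =>
        have : n * (k + 1) + ij.2 - n = n * k + ij.2 := by
          rw [Nat.mul_succ]; omega
        rw [this]
        exact hx ij hij k

/-- The map `S ↦ closed span of {e_i z^{nk+j} : (i,j) ∈ S, k ∈ ℕ}` is injective on subsets of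
`{1,…,m} × {0,…,n-1}`, and each such subspace reduces `T_{z^n}`; consequently `T_{z^n}` has at
least `2^{mn}` distinct reducing subspaces. -/
theorem at_least_two_pow_mn_reducing_subspaces (m n : ℕ) (hm : 1 ≤ m) (hn : 1 ≤ n)
    (T : HardyVec m →L[ℂ] HardyVec m)
    (hT : ∀ (F : HardyVec m) (k : ℕ), T F k = if k < n then 0 else F (k - n)) :
    Function.Injective (spanOf m n) ∧
    (∀ S : Set (Fin m × Fin n),
      (∀ x ∈ spanOf m n S, T x ∈ spanOf m n S) ∧
      (∀ x ∈ (spanOf m n S)ᗮ, T x ∈ (spanOf m n S)ᗮ)) ∧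
    (∃ F : Finset (Submodule ℂ (HardyVec m)), F.card = 2 ^ (m * n) ∧
      ∀ M ∈ F, IsClosed (M : Set (HardyVec m)) ∧
        (∀ x ∈ M, T x ∈ M) ∧ (∀ x ∈ Mᗮ, T x ∈ Mᗮ)) := by
  classical
  refine ⟨spanOf_inj m n, spanOf_red m n T hT,
    Finset.univ.map ⟨spanOf m n, spanOf_inj m n⟩, ?_, ?_⟩
  · simp [Fintype.card_set]
  · intro M hM
    obtain ⟨S, -, rfl⟩ := Finset.mem_map.1 hM
    exact ⟨Submodule.isClosed_topologicalClosure _, spanOf_red m n T hT S⟩
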